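/- arXiv:1506.06284 — 2 statements merged into one kernel-verified Lean document; each statement's English description precedes it below -/
import Mathlib

section
/- For any integer s with n/2 < s ≤ n, there exists a pair of antichains in 𝒜_s which has the maximum cardinality among all pairs in 𝒜_s and in which every tuple other than γ_s has weight at most (n+3)/2 and at least ⌊n/2⌋. -/
/-!
Identify tuples with the subsets of `Fin n` on which they equal `1`. The unions `T' ∪ T''` of pairs
of antichains `T' < T''` with `g ∈ T'` are exactly the families without 3-chains that have `g` as a
minimal member: from such a family, `T'` is recovered as the minimal members.

Let `k < ⌊n/2⌋` be the least size of a member of such a family `F`. Replace the set `A` of its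
members of size `k` by the upper shadow of `A`, together with the upper shadow of those members `C`
of `F` that lie in the upper shadow of `A`. No 3-chain arises and nothing below `g` arises. By
local LYM the family does not shrink; both levels have to be counted together, since the upper
shadow of `C` may be smaller than `C` if `2k + 2 = n`.

The same works downwards from the largest size `k > ⌊n/2⌋ + 1` of a member other than `g`, if only
the sets not contained in `g` are kept in the shadows: a `k`-set that is not contained in `g` still
has `k - 1` such subsets of size `k - 1`, and the count tolerates the loss of one.

Both moves bring sizes closer to `{⌊n/2⌋, ⌊n/2⌋ + 1}`. Hence neither applies to a family of maximum
cardinality in which the sum of the distances to these two levels is least.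
-/

/-- The weight of a binary tuple: the number of its 1-components. -/
def bweight {n : ℕ} (α : Fin n → Bool) : ℕ :=
  (Finset.univ.filter fun i => α i = true).card

/-- The tuple `γ_s ∈ Bⁿ` whose first `n - s` components equal `0` and whose
last `s` components equal `1`. -/
def gammaTuple (n s : ℕ) : Fin n → Bool := fun i => decide (n - s ≤ (i : ℕ))

/-- `T' < T''`: there are no tuples `a ∈ T'`, `b ∈ T''` with `a ≥ b`. -/
def PairBelow {n : ℕ} (T' T'' : Set (Fin n → Bool)) : Prop :=
  ∀ a ∈ T', ∀ b ∈ T'', ¬ b ≤ a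

/-- A pair `(T', T'')` of antichains in `Bⁿ` with `T' < T''`. -/
def AntichainPair {n : ℕ} (T' T'' : Set (Fin n → Bool)) : Prop :=
  IsAntichain (· ≤ ·) T' ∧ IsAntichain (· ≤ ·) T'' ∧ PairBelow T' T''

/-- Membership of a pair of antichains in `𝒜_s`: a pair of antichains with
`T' < T''` and `γ_s ∈ T'`. -/
def MemA {n : ℕ} (s : ℕ) (T' T'' : Set (Fin n → Bool)) : Prop :=
  AntichainPair T' T'' ∧ gammaTuple n s ∈ T'

/-- Membership of a pair of antichains in `𝒜'_t`: a pair of antichains with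
`T' < T''` in which every tuple has weight at most `t`. -/
def MemA' {n : ℕ} (t : ℕ) (T' T'' : Set (Fin n → Bool)) : Prop :=
  AntichainPair T' T'' ∧ ∀ α ∈ T' ∪ T'', bweight α ≤ t

open Finset
open scoped FinsetFamily

/-! ### Improving finite sets by exchanges -/

section Improves

variable {β : Type*} [DecidableEq β] {w : β → ℕ} {F G : Finset β}

/-- `G` arises from `F` by exchanging some elements for at least as many elements, each of which is
lighter with respect to `w` than every element given up. -/
def Improves (w : β → ℕ) (F G : Finset β) : Prop :=
  #F ≤ #G ∧ (F \ G).Nonempty ∧ ∀ x ∈ F \ G, ∀ y ∈ G \ F, w y < w x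

lemma Improves.sum_lt_sum (h : Improves w F G) (hcard : #F = #G) :
    ∑ y ∈ G, w y < ∑ x ∈ F, w x := by
  obtain ⟨-, hne, hlt⟩ := h
  have hcard' : #(G \ F) = #(F \ G) := card_sdiff_comm hcard.symm
  have hne' : (G \ F).Nonempty := card_pos.1 (hcard' ▸ hne.card_pos)
  obtain ⟨y₀, hy₀, hmax⟩ := exists_max_image (G \ F) w hne'
  rw [← sum_sdiff_lt_sum_sdiff]
  calc ∑ y ∈ G \ F, w y ≤ #(G \ F) • w y₀ := sum_le_card_nsmul _ _ _ hmax
    _ = ∑ _x ∈ F \ G, w y₀ := by rw [hcard', sum_const]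
    _ < ∑ x ∈ F \ G, w x := sum_lt_sum_of_nonempty hne fun x hx => hlt x hx y₀ hy₀

lemma exists_card_max_forall_not_improves [Finite β] (w : β → ℕ) {P : Finset β → Prop}
    (hP : ∃ F, P F) :
    ∃ F, P F ∧ (∀ G, P G → #G ≤ #F) ∧ ∀ G, P G → ¬ Improves w F G := by
  obtain ⟨F, hF, hmax⟩ := Set.exists_max_image {F | P F}
    (fun F => toLex (#F, OrderDual.toDual (∑ x ∈ F, w x))) (Set.toFinite _) hP
  simp only [Prod.Lex.toLex_le_toLex, OrderDual.toDual_le_toDual] at hmax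
  have hcard : ∀ G, P G → #G ≤ #F := fun G hG => by
    rcases hmax G hG with hlt | ⟨heq, -⟩
    exacts [hlt.le, heq.le]
  refine ⟨F, hF, hcard, fun G hG himp => ?_⟩
  have heq : #F = #G := himp.1.antisymm (hcard G hG)
  rcases hmax G hG with hlt | ⟨-, hsum⟩
  · exact hlt.ne heq.symm
  · exact (himp.sum_lt_sum heq).not_ge hsum

end Improves

/-! ### Pushing a family along a shadow operator -/

/-- `S` contains no `x`, `y`, `z` with `r x y` and `r y z`. -/
def ThreeChainFree {β : Type*} (r : β → β → Prop) (S : Set β) : Prop :=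
  ∀ ⦃x⦄, x ∈ S → ∀ ⦃y⦄, y ∈ S → ∀ ⦃z⦄, z ∈ S → r x y → ¬ r y z

lemma ThreeChainFree.swap {β : Type*} {r : β → β → Prop} {S : Set β} (hS : ThreeChainFree r S) :
    ThreeChainFree (Function.swap r) S :=
  fun _ hx _ hy _ hz hyx hzy => hS hz hy hx hzy hyx

section Push

variable {β : Type*} [DecidableEq β] {σ : Finset β → Finset β} {F A : Finset β}

/-- What replaces `A` when it is pushed out of `F` along the shadow operator `σ`: the shadow of `A`,
and the shadow of the members of `F` that lie in it. -/
def pushImage (σ : Finset β → Finset β) (F A : Finset β) : Finset β :=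
  σ A ∪ σ (F ∩ σ A)

/-- The family that arises from `F` when `A` is pushed out along the shadow operator `σ`. -/
def push (σ : Finset β → Finset β) (F A : Finset β) : Finset β :=
  F \ A ∪ pushImage σ F A

lemma improves_push {w : β → ℕ} (hAF : A ⊆ F) (hA : A.Nonempty) (hcard : #F ≤ #(push σ F A))
    (hw : ∀ a ∈ A, ∀ y ∈ pushImage σ F A, w y < w a) : Improves w F (push σ F A) := by
  have hdisj : ∀ a ∈ A, a ∉ pushImage σ F A := fun a ha ha' => (hw a ha a ha').false
  refine ⟨hcard, ?_, fun x hx y hy => hw x ?_ y ?_⟩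
  · obtain ⟨a, ha⟩ := hA
    exact ⟨a, by simp [push, hAF ha, ha, hdisj a ha]⟩
  · simp only [push, mem_sdiff, mem_union] at hx
    tauto
  · simp only [push, mem_sdiff, mem_union] at hy
    tauto

lemma minimal_mem_push [PartialOrder β] {g : β} (hg : Minimal (· ∈ F) g) (hgA : g ∉ A)
    (hnew : ∀ x ∈ pushImage σ F A, ¬ x ≤ g) : Minimal (· ∈ push σ F A) g := by
  refine ⟨mem_union_left _ (mem_sdiff.2 ⟨hg.prop, hgA⟩), fun x hx hxg => ?_⟩
  rcases mem_union.1 hx with hx | hx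
  · exact hg.le_of_le (mem_sdiff.1 hx).1 hxg
  · exact absurd hxg (hnew x hx)

variable {r : β → β → Prop}

lemma exists_chain_of_mem_shadow_inter (hσ : ∀ B, ∀ x ∈ σ B, ∃ b ∈ B, r b x) (hAF : A ⊆ F) {x : β}
    (hx : x ∈ σ (F ∩ σ A)) : ∃ a ∈ F, ∃ c ∈ F, r a c ∧ r c x := by
  obtain ⟨c, hc, hcx⟩ := hσ _ x hx
  obtain ⟨hcF, hcA⟩ := mem_inter.1 hc
  obtain ⟨a, ha, hac⟩ := hσ A c hcA
  exact ⟨a, hAF ha, c, hcF, hac, hcx⟩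

lemma threeChainFree_push [IsTrans β r] (hσ : ∀ B, ∀ x ∈ σ B, ∃ b ∈ B, r b x) (hAF : A ⊆ F)
    (hF : ThreeChainFree r (F : Set β)) (hbot : ∀ x ∈ push σ F A, ∀ y ∈ σ A, ¬ r x y)
    (hbot₂ : ∀ x ∈ push σ F A, ∀ y ∈ push σ F A, ∀ z ∈ σ (F ∩ σ A), r x y → ¬ r y z) :
    ThreeChainFree r (push σ F A : Set β) := by
  have hcases : ∀ x ∈ push σ F A, x ∈ F ∨ x ∈ σ A ∨ x ∈ σ (F ∩ σ A) := fun x hx => by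
    simp only [push, pushImage, mem_union, mem_sdiff] at hx
    tauto
  intro x hx y hy z hz hxy hyz
  have hzF : z ∈ F := by
    rcases hcases z hz with hz' | hz' | hz'
    exacts [hz', absurd hyz (hbot y hy z hz'), absurd hyz (hbot₂ x hx y hy z hz' hxy)]
  rcases hcases y hy with hyF | hyA | hyC
  · rcases hcases x hx with hxF | hxA | hxC
    · exact hF hxF hyF hzF hxy hyz
    · obtain ⟨a, ha, hax⟩ := hσ A x hxA
      exact hF (hAF ha) hyF hzF (_root_.trans hax hxy) hyz
    · obtain ⟨a, ha, c, hc, hac, hcx⟩ := exists_chain_of_mem_shadow_inter hσ hAF hxC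
      exact hF ha hc hyF hac (_root_.trans hcx hxy)
  · exact hbot x hx y hyA hxy
  · obtain ⟨a, ha, c, hc, hac, hcy⟩ := exists_chain_of_mem_shadow_inter hσ hAF hyC
    exact hF ha hc hzF hac (_root_.trans hcy hyz)

lemma le_add_of_two_step_bounds {a c d e p q : ℕ} (hpq : p ≤ q)
    (h₁ : a * (q + 1) ≤ (d + c) * p) (h₂ : c * q ≤ e * (p + 1)) : a ≤ d + e := by
  rcases q.eq_zero_or_pos with rfl | hq
  · obtain rfl : p = 0 := by omega
    omega
  refine Nat.le_of_mul_le_mul_right ?_ (Nat.mul_pos q.succ_pos hq)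
  calc a * ((q + 1) * q) = a * (q + 1) * q := by ring
    _ ≤ (d + c) * p * q := Nat.mul_le_mul_right _ h₁
    _ = d * (p * q) + c * q * p := by ring
    _ ≤ d * (p * q) + e * (p + 1) * p := by gcongr
    _ = d * (p * q) + e * ((p + 1) * p) := by ring
    _ ≤ d * ((q + 1) * q) + e * ((q + 1) * q) := by gcongr; omega
    _ = (d + e) * ((q + 1) * q) := by ring

lemma card_le_card_push {p q : ℕ} (hσ : ∀ B, ∀ x ∈ σ B, ∃ b ∈ B, r b x) (hAF : A ⊆ F)
    (hF : ThreeChainFree r (F : Set β)) (hbot : ∀ x ∈ push σ F A, ∀ y ∈ σ A, ¬ r x y)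
    (hpq : p ≤ q) (h₁ : #A * (q + 1) ≤ #(σ A) * p)
    (h₂ : #(F ∩ σ A) * q ≤ #(σ (F ∩ σ A)) * (p + 1)) : #F ≤ #(push σ F A) := by
  have hCF : Disjoint F (σ (F ∩ σ A)) := disjoint_left.2 fun x hxF hx => by
    obtain ⟨a, ha, c, hc, hac, hcx⟩ := exists_chain_of_mem_shadow_inter hσ hAF hx
    exact hF ha hc hxF hac hcx
  have hCA : Disjoint (σ A) (σ (F ∩ σ A)) := disjoint_left.2 fun x hxA hx => by
    obtain ⟨c, hc, hcx⟩ := hσ _ x hx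
    have hcA : c ∈ σ A := (mem_inter.1 hc).2
    exact hbot c (mem_union_right _ (mem_union_left _ hcA)) x hxA hcx
  have hgain : #A ≤ #(σ A \ F) + #(σ (F ∩ σ A)) := by
    refine le_add_of_two_step_bounds hpq ?_ h₂
    rwa [inter_comm, card_sdiff_add_card_inter]
  have hdisj₁ : Disjoint (F \ A) (σ A \ F ∪ σ (F ∩ σ A)) :=
    (disjoint_union_right.2 ⟨disjoint_sdiff, hCF⟩).mono_left sdiff_subset
  have hdisj₂ : Disjoint (σ A \ F) (σ (F ∩ σ A)) := hCA.mono_left sdiff_subset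
  calc #F = #(F \ A) + #A := (card_sdiff_add_card_eq_card hAF).symm
    _ ≤ #(F \ A) + (#(σ A \ F) + #(σ (F ∩ σ A))) := by gcongr
    _ = #(F \ A ∪ (σ A \ F ∪ σ (F ∩ σ A))) := by
        rw [card_union_of_disjoint hdisj₁, card_union_of_disjoint hdisj₂]
    _ ≤ #(push σ F A) :=
        card_le_card (union_subset_union_right (union_subset_union_left sdiff_subset))

end Push

/-! ### Shadows in the Boolean lattice -/

section Shadow

variable {α : Type*} [DecidableEq α] {𝒜 ℬ : Finset (Finset α)} {g x : Finset α} {d k : ℕ}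

/-- The members of the shadow of `𝒜` that are not contained in `g`. -/
def outerShadow (g : Finset α) (𝒜 : Finset (Finset α)) : Finset (Finset α) :=
  {x ∈ ∂ 𝒜 | ¬ x ≤ g}

lemma not_le_of_mem_outerShadow (hx : x ∈ outerShadow g 𝒜) : ¬ x ≤ g :=
  (mem_filter.1 hx).2

lemma exists_gt_of_mem_outerShadow (hx : x ∈ outerShadow g 𝒜) : ∃ a ∈ 𝒜, a > x := by
  obtain ⟨a, ha, i, hi, rfl⟩ := mem_shadow_iff.1 (mem_filter.1 hx).1
  exact ⟨a, ha, erase_ssubset hi⟩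

lemma sized_outerShadow (h𝒜 : (𝒜 : Set (Finset α)).Sized (k + 1)) :
    (outerShadow g 𝒜 : Set (Finset α)).Sized k :=
  h𝒜.shadow.mono (coe_subset.2 (filter_subset _ _))

variable [Fintype α]

lemma exists_lt_of_mem_upShadow (hx : x ∈ ∂⁺ 𝒜) : ∃ a ∈ 𝒜, a < x := by
  obtain ⟨a, ha, i, hi, rfl⟩ := mem_upShadow_iff.1 hx
  exact ⟨a, ha, ssubset_insert hi⟩

lemma card_mul_le_card_upShadow_mul (h𝒜 : (𝒜 : Set (Finset α)).Sized k) :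
    #𝒜 * (Fintype.card α - k) ≤ #(∂⁺ 𝒜) * (k + 1) := by
  rcases 𝒜.eq_empty_or_nonempty with rfl | ⟨a, ha⟩
  · simp
  have hk : k ≤ Fintype.card α := h𝒜 ha ▸ card_le_univ a
  have hcompls : (𝒜ᶜˢ : Set (Finset α)).Sized (Fintype.card α - k) :=
    h𝒜.compls
  simpa [Nat.sub_sub_self hk] using card_mul_le_card_shadow_mul hcompls

lemma card_mul_le_card_mul_of_le_card_subsets (h𝒜 : (𝒜 : Set (Finset α)).Sized (k + 1))
    (hℬ : (ℬ : Set (Finset α)).Sized k) (hd : ∀ a ∈ 𝒜, d ≤ #{b ∈ ℬ | b ⊆ a}) :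
    #𝒜 * d ≤ #ℬ * (Fintype.card α - k) := by
  refine card_mul_le_card_mul (r := fun a b : Finset α => b ⊆ a) hd fun b hb => ?_
  rw [← hℬ hb, ← card_compl, ← card_image_of_injOn (insert_inj_on' b)]
  refine card_le_card fun a ha => ?_
  obtain ⟨ha𝒜, hba⟩ := (mem_bipartiteBelow _).1 ha
  obtain ⟨i, hi, rfl⟩ := exists_eq_insert_iff.2 ⟨hba, by rw [h𝒜 ha𝒜, hℬ hb]⟩
  exact mem_image_of_mem _ (mem_compl.2 hi)

lemma card_mul_le_card_outerShadow_mul (h𝒜 : (𝒜 : Set (Finset α)).Sized (k + 1))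
    (hg : ∀ a ∈ 𝒜, ¬ a ≤ g) : #𝒜 * k ≤ #(outerShadow g 𝒜) * (Fintype.card α - k) := by
  refine card_mul_le_card_mul_of_le_card_subsets h𝒜 (sized_outerShadow h𝒜) fun a ha => ?_
  -- Erasing any element other than `i₀` leaves a set that is not contained in `g`.
  obtain ⟨i₀, hi₀, hi₀g⟩ := not_subset.1 (hg a ha)
  calc k = #((a.erase i₀).image a.erase) := by
        rw [card_image_of_injOn ((erase_injOn a).mono (coe_subset.2 (erase_subset _ _))),
          card_erase_of_mem hi₀, h𝒜 ha, Nat.add_sub_cancel]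
    _ ≤ _ := card_le_card <| image_subset_iff.2 fun i hi => by
        obtain ⟨hne, hia⟩ := mem_erase.1 hi
        exact mem_filter.2 ⟨mem_filter.2 ⟨erase_mem_shadow ha hia,
          fun hle => hi₀g (hle (mem_erase.2 ⟨hne.symm, hi₀⟩))⟩, erase_subset i a⟩

end Shadow

/-! ### Families without 3-chains and with a prescribed minimal member -/

/-- `S` has no 3-chains and `g` is one of its minimal members. These sets are the unions `T' ∪ T''`
of the pairs of antichains `T' < T''` with `g ∈ T'`. -/
structure IsPairUnion {β : Type*} [PartialOrder β] (g : β) (S : Set β) : Prop where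
  minimal : Minimal (· ∈ S) g
  threeChainFree : ThreeChainFree (· < ·) S

namespace IsPairUnion

lemma singleton {β : Type*} [PartialOrder β] (g : β) : IsPairUnion g {g} where
  minimal := minimal_eq_iff.2 rfl
  threeChainFree := by
    rintro x rfl y rfl z - hxy
    exact absurd hxy (lt_irrefl _)

lemma not_le_of_mem_of_ne {β : Type*} [PartialOrder β] {g x : β} {S : Set β}
    (hS : IsPairUnion g S) (hx : x ∈ S) (hxg : x ≠ g) : ¬ x ≤ g :=
  fun hle => hxg (hS.minimal.eq_of_le hx hle)

lemma preimage {β γ : Type*} [PartialOrder β] [PartialOrder γ] (e : β ≃o γ) {g : β} {S : Set γ}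
    (hS : IsPairUnion (e g) S) : IsPairUnion g (e ⁻¹' S) where
  minimal := ⟨hS.minimal.prop, fun _ hx hxg =>
    e.le_iff_le.1 (hS.minimal.le_of_le hx (e.monotone hxg))⟩
  threeChainFree _ hx _ hy _ hz hxy hyz :=
    hS.threeChainFree hx hy hz (e.strictMono hxy) (e.strictMono hyz)

end IsPairUnion

section PushOuterShadow

variable {α : Type*} [DecidableEq α] {g x y : Finset α} {F A : Finset (Finset α)} {k : ℕ}

lemma sized_inter_outerShadow (hA : (A : Set (Finset α)).Sized (k + 1)) :
    ((F ∩ outerShadow g A : Finset (Finset α)) : Set (Finset α)).Sized k :=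
  (sized_outerShadow hA).mono (coe_subset.2 inter_subset_right)

lemma card_of_mem_pushImage_outerShadow (hA : (A : Set (Finset α)).Sized (k + 2))
    (hx : x ∈ pushImage (outerShadow g) F A) : #x = k + 1 ∨ #x = k :=
  (mem_union.1 hx).imp (sized_outerShadow hA ·) (sized_outerShadow (sized_inter_outerShadow hA) ·)

lemma card_lt_of_mem_push_outerShadow (hmax : ∀ x ∈ F, x ≠ g → #x ≤ k + 2)
    (hx : x ∈ push (outerShadow g) F ((F.erase g).slice (k + 2))) (hxg : x ≠ g) : #x < k + 2 := by
  rcases mem_union.1 hx with hx | hx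
  · obtain ⟨hxF, hxk⟩ := mem_sdiff.1 hx
    exact (hmax x hxF hxg).lt_of_ne fun h => hxk (mem_slice.2 ⟨mem_erase.2 ⟨hxg, hxF⟩, h⟩)
  · have := card_of_mem_pushImage_outerShadow sized_slice hx
    omega

lemma not_gt_of_mem_push_outerShadow (hmax : ∀ x ∈ F, x ≠ g → #x ≤ k + 2)
    (hx : x ∈ push (outerShadow g) F ((F.erase g).slice (k + 2)))
    (hy : y ∈ outerShadow g ((F.erase g).slice (k + 2))) : ¬ x > y := by
  intro hxy
  have hxg : x ≠ g := fun h => not_le_of_mem_outerShadow hy (h ▸ hxy.le)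
  have hxk := card_lt_of_mem_push_outerShadow hmax hx hxg
  have hyk : #y = k + 1 := sized_outerShadow sized_slice hy
  have := card_strictMono hxy
  omega

lemma IsPairUnion.push_outerShadow (hF : IsPairUnion g (F : Set (Finset α)))
    (hmax : ∀ x ∈ F, x ≠ g → #x ≤ k + 2) :
    IsPairUnion g (push (outerShadow g) F ((F.erase g).slice (k + 2)) : Set (Finset α)) where
  minimal := by
    refine minimal_mem_push hF.minimal (fun hg => notMem_erase g F (slice_subset hg)) fun x hx => ?_
    exact (mem_union.1 hx).elim not_le_of_mem_outerShadow not_le_of_mem_outerShadow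
  threeChainFree := by
    refine (threeChainFree_push (r := (· > ·)) (fun _ _ => exists_gt_of_mem_outerShadow)
      (slice_subset.trans (erase_subset g F)) hF.threeChainFree.swap
      (fun x hx y hy => not_gt_of_mem_push_outerShadow hmax hx hy) ?_).swap
    intro x hx y _ z hz hxy hyz
    have hne : ∀ t, t > z → t ≠ g := fun t ht h => not_le_of_mem_outerShadow hz (h ▸ ht.le)
    have hxk := card_lt_of_mem_push_outerShadow hmax hx (hne x (hyz.trans hxy))
    have hzk : #z = k := sized_outerShadow (sized_inter_outerShadow sized_slice) hz
    have := card_strictMono hxy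
    have := card_strictMono hyz
    omega

end PushOuterShadow

section PushUpShadow

variable {α : Type*} [Fintype α] [DecidableEq α] {g x y : Finset α} {F A : Finset (Finset α)}
  {k : ℕ}

lemma sized_inter_upShadow (hA : (A : Set (Finset α)).Sized k) :
    ((F ∩ ∂⁺ A : Finset (Finset α)) : Set (Finset α)).Sized (k + 1) :=
  hA.upShadow.mono (coe_subset.2 inter_subset_right)

lemma card_of_mem_pushImage_upShadow (hA : (A : Set (Finset α)).Sized k)
    (hx : x ∈ pushImage upShadow F A) : #x = k + 1 ∨ #x = k + 2 :=
  (mem_union.1 hx).imp (hA.upShadow ·) ((sized_inter_upShadow hA).upShadow ·)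

lemma lt_card_of_mem_push_upShadow (hmin : ∀ x ∈ F, k ≤ #x)
    (hx : x ∈ push upShadow F (F.slice k)) : k < #x := by
  rcases mem_union.1 hx with hx | hx
  · obtain ⟨hxF, hxk⟩ := mem_sdiff.1 hx
    exact (hmin x hxF).lt_of_ne fun h => hxk (mem_slice.2 ⟨hxF, h.symm⟩)
  · have := card_of_mem_pushImage_upShadow sized_slice hx
    omega

lemma not_lt_of_mem_push_upShadow (hmin : ∀ x ∈ F, k ≤ #x)
    (hx : x ∈ push upShadow F (F.slice k)) (hy : y ∈ ∂⁺ (F.slice k)) : ¬ x < y := by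
  intro hxy
  have hxk := lt_card_of_mem_push_upShadow hmin hx
  have hyk : #y = k + 1 := sized_slice.upShadow hy
  have := card_strictMono hxy
  omega

lemma IsPairUnion.push_upShadow (hF : IsPairUnion g (F : Set (Finset α)))
    (hmin : ∀ x ∈ F, k ≤ #x) (hkg : k < #g) :
    IsPairUnion g (push upShadow F (F.slice k) : Set (Finset α)) where
  minimal := by
    refine minimal_mem_push hF.minimal (fun hg => hkg.ne' (mem_slice.1 hg).2) fun x hx hxg => ?_
    obtain ⟨b, hbF, hbx⟩ : ∃ b ∈ F, b < x := by
      rcases mem_union.1 hx with hx | hx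
      · obtain ⟨a, ha, hax⟩ := exists_lt_of_mem_upShadow hx
        exact ⟨a, slice_subset ha, hax⟩
      · obtain ⟨c, hc, hcx⟩ := exists_lt_of_mem_upShadow hx
        exact ⟨c, (mem_inter.1 hc).1, hcx⟩
    exact hF.minimal.not_lt hbF (hbx.trans_le hxg)
  threeChainFree := by
    refine threeChainFree_push (fun _ _ => exists_lt_of_mem_upShadow) slice_subset
      hF.threeChainFree (fun x hx y hy => not_lt_of_mem_push_upShadow hmin hx hy) ?_
    intro x hx y _ z hz hxy hyz
    have hxk := lt_card_of_mem_push_upShadow hmin hx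
    have hzk : #z = k + 2 := (sized_inter_upShadow sized_slice).upShadow hz
    have := card_strictMono hxy
    have := card_strictMono hyz
    omega

end PushUpShadow

/-! ### Extremal families -/

section Extremal

variable {α : Type*} [Fintype α] {g x : Finset α} {F : Finset (Finset α)}

/-- The distance from `#x` to the two middle levels `n / 2` and `n / 2 + 1`, where `n` is the size
of the ground set; by truncation at most one of the two summands is nonzero. -/
def middleDist (x : Finset α) : ℕ :=
  (Fintype.card α / 2 - #x) + (#x - (Fintype.card α / 2 + 1))

namespace IsPairUnion

variable [DecidableEq α]

lemma exists_improves_of_card_lt (hF : IsPairUnion g (F : Set (Finset α)))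
    (hg : Fintype.card α / 2 ≤ #g) (hx : x ∈ F) (hmin : ∀ y ∈ F, #x ≤ #y)
    (hlt : #x < Fintype.card α / 2) :
    ∃ G : Finset (Finset α), IsPairUnion g (G : Set (Finset α)) ∧
      Improves middleDist F G := by
  refine ⟨push upShadow F (F.slice #x), hF.push_upShadow hmin (hlt.trans_le hg),
    improves_push slice_subset ⟨x, mem_slice.2 ⟨hx, rfl⟩⟩ ?_ fun a ha y hy => ?_⟩
  · refine card_le_card_push (p := #x + 1) (q := Fintype.card α - (#x + 1))
      (fun _ _ => exists_lt_of_mem_upShadow) slice_subset hF.threeChainFree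
      (fun y hy z hz => not_lt_of_mem_push_upShadow hmin hy hz) (by omega) ?_
      (card_mul_le_card_upShadow_mul (sized_inter_upShadow sized_slice))
    rw [show Fintype.card α - (#x + 1) + 1 = Fintype.card α - #x by omega]
    exact card_mul_le_card_upShadow_mul sized_slice
  · have hak : #a = #x := (mem_slice.1 ha).2
    have hyk := card_of_mem_pushImage_upShadow sized_slice hy
    simp only [middleDist]
    omega

lemma exists_improves_of_lt_card (hF : IsPairUnion g (F : Set (Finset α))) (hx : x ∈ F)
    (hxg : x ≠ g) (hmax : ∀ y ∈ F, y ≠ g → #y ≤ #x) (hlt : Fintype.card α / 2 + 1 < #x) :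
    ∃ G : Finset (Finset α), IsPairUnion g (G : Set (Finset α)) ∧
      Improves middleDist F G := by
  obtain ⟨k, hk⟩ : ∃ k, #x = k + 2 := ⟨#x - 2, by omega⟩
  rw [hk] at hmax
  have hAF : (F.erase g).slice (k + 2) ⊆ F := slice_subset.trans (erase_subset g F)
  have hAg : ∀ a ∈ (F.erase g).slice (k + 2), ¬ a ≤ g := fun a ha =>
    hF.not_le_of_mem_of_ne (hAF ha) (ne_of_mem_erase (slice_subset ha))
  have hCg : ∀ c ∈ F ∩ outerShadow g ((F.erase g).slice (k + 2)), ¬ c ≤ g := fun c hc =>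
    not_le_of_mem_outerShadow (mem_inter.1 hc).2
  refine ⟨push (outerShadow g) F ((F.erase g).slice (k + 2)), hF.push_outerShadow hmax,
    improves_push hAF ⟨x, mem_slice.2 ⟨mem_erase.2 ⟨hxg, hx⟩, hk⟩⟩ ?_ fun a ha y hy => ?_⟩
  · refine card_le_card_push (r := (· > ·)) (p := Fintype.card α - (k + 1)) (q := k)
      (fun _ _ => exists_gt_of_mem_outerShadow) hAF hF.threeChainFree.swap
      (fun y hy z hz => not_gt_of_mem_push_outerShadow hmax hy hz) (by omega)
      (card_mul_le_card_outerShadow_mul sized_slice hAg) ?_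
    refine (card_mul_le_card_outerShadow_mul (sized_inter_outerShadow sized_slice) hCg).trans ?_
    gcongr
    omega
  · have hak : #a = k + 2 := (mem_slice.1 ha).2
    have hyk := card_of_mem_pushImage_outerShadow sized_slice hy
    simp only [middleDist]
    omega

end IsPairUnion

lemma exists_isPairUnion_card_max_middle (hg : Fintype.card α / 2 ≤ #g) :
    ∃ F : Finset (Finset α), IsPairUnion g (F : Set (Finset α)) ∧
      (∀ G : Finset (Finset α), IsPairUnion g (G : Set (Finset α)) → #G ≤ #F) ∧
      ∀ x ∈ F, x ≠ g → Fintype.card α / 2 ≤ #x ∧ #x ≤ Fintype.card α / 2 + 1 := by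
  classical
  obtain ⟨F, hF, hmax, hnot⟩ := exists_card_max_forall_not_improves middleDist
    (P := fun F => IsPairUnion g (F : Set (Finset α)))
    ⟨{g}, by simpa using IsPairUnion.singleton g⟩
  refine ⟨F, hF, hmax, fun x hx hxg => ⟨?_, ?_⟩⟩ <;> by_contra! hlt
  · obtain ⟨y, hy, hymin⟩ := exists_min_image F card ⟨x, hx⟩
    obtain ⟨G, hG, himp⟩ :=
      hF.exists_improves_of_card_lt hg hy hymin ((hymin x hx).trans_lt hlt)
    exact hnot G hG himp
  · obtain ⟨y, hy, hymax⟩ := exists_max_image (F.erase g) card ⟨x, mem_erase.2 ⟨hxg, hx⟩⟩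
    obtain ⟨hyg, hyF⟩ := mem_erase.1 hy
    obtain ⟨G, hG, himp⟩ := hF.exists_improves_of_lt_card hyF hyg
      (fun z hz hzg => hymax z (mem_erase.2 ⟨hzg, hz⟩))
      (hlt.trans_le (hymax x (mem_erase.2 ⟨hxg, hx⟩)))
    exact hnot G hG himp

end Extremal

/-! ### Pairs of antichains of tuples -/

/-- A binary tuple, viewed as the set of the positions at which it equals `1`. -/
def onesOrderIso (ι : Type*) [Fintype ι] [DecidableEq ι] : (ι → Bool) ≃o Finset ι where
  toFun a := {i | a i = true}
  invFun x i := decide (i ∈ x)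
  left_inv a := by simp
  right_inv x := by simp
  map_rel_iff' := by
    simp [subset_iff, Pi.le_def, Bool.le_iff_imp]

section Tuples

variable {n s : ℕ} {γ : Fin n → Bool} {S T' T'' : Set (Fin n → Bool)}

lemma bweight_gammaTuple (hs : s ≤ n) : bweight (gammaTuple n s) = s := by
  have hcompl : (univ.filter fun i => gammaTuple n s i = true) =
      ({i | (i : ℕ) < n - s} : Finset (Fin n))ᶜ := by
    ext i
    simp [gammaTuple]
  rw [bweight, hcompl, card_compl, Fin.card_filter_val_lt, Fintype.card_fin]
  omega

lemma AntichainPair.ncard_union (h : AntichainPair T' T'') :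
    (T' ∪ T'').ncard = T'.ncard + T''.ncard :=
  Set.ncard_union_eq (Set.disjoint_left.2 fun a ha ha' => h.2.2 a ha a ha' le_rfl)

lemma AntichainPair.isPairUnion (h : AntichainPair T' T'') (hγ : γ ∈ T') :
    IsPairUnion γ (T' ∪ T'') := by
  obtain ⟨hT', hT'', hbelow⟩ := h
  refine ⟨⟨Or.inl hγ, ?_⟩, ?_⟩
  · rintro a (ha | ha) haγ
    · exact (hT'.eq ha hγ haγ).ge
    · exact absurd haγ (hbelow γ hγ a ha)
  · rintro a ha b (hb | hb) c hc hab hbc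
    · rcases ha with ha | ha
      · exact hab.ne (hT'.eq ha hb hab.le)
      · exact hbelow b hb a ha hab.le
    · rcases hc with hc | hc
      · exact hbelow c hc b hb hbc.le
      · exact hbc.ne (hT''.eq hb hc hbc.le)

lemma IsPairUnion.antichainPair (hS : IsPairUnion γ S) :
    AntichainPair {a | Minimal (· ∈ S) a} (S \ {a | Minimal (· ∈ S) a}) := by
  have hbelow : ∀ b ∈ S \ {a | Minimal (· ∈ S) a}, ∃ c ∈ S, c < b := fun b hb => by
    obtain ⟨c, hcb, hc⟩ := (not_minimal_iff_exists_lt hb.1).1 hb.2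
    exact ⟨c, hc, hcb⟩
  refine ⟨setOfPred_minimal_antichain _, fun a ha b hb hne hab => ?_, fun a ha b hb hba => ?_⟩
  · obtain ⟨c, hc, hca⟩ := hbelow a ha
    exact hS.threeChainFree hc ha.1 hb.1 hca (hab.lt_of_ne hne)
  · obtain ⟨c, hc, hcb⟩ := hbelow b hb
    exact ha.not_lt hc (hcb.trans_le hba)

lemma exists_isPairUnion_ncard_max_middle (hγ : n / 2 ≤ bweight γ) :
    ∃ S : Set (Fin n → Bool), IsPairUnion γ S ∧ (∀ R, IsPairUnion γ R → R.ncard ≤ S.ncard) ∧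
      ∀ a ∈ S, a ≠ γ → n / 2 ≤ bweight a ∧ bweight a ≤ n / 2 + 1 := by
  let e := onesOrderIso (Fin n)
  obtain ⟨F, hF, hmax, hmid⟩ := exists_isPairUnion_card_max_middle (g := e γ)
    (by rwa [Fintype.card_fin])
  rw [Fintype.card_fin] at hmid
  refine ⟨e ⁻¹' F, hF.preimage e, fun R hR => ?_, fun a ha hne =>
    hmid (e a) ha (e.injective.ne hne)⟩
  obtain ⟨G, hG⟩ := (Set.toFinite (e.symm ⁻¹' R)).exists_finset_coe
  have hGunion : IsPairUnion (e γ) (G : Set (Finset (Fin n))) :=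
    hG ▸ IsPairUnion.preimage e.symm (by rwa [e.symm_apply_apply])
  calc R.ncard = #G := by
        rw [← Set.ncard_coe_finset, hG, ← e.image_eq_preimage_symm,
          Set.ncard_image_of_injective _ e.injective]
    _ ≤ #F := hmax G hGunion
    _ = (e ⁻¹' F).ncard := by
        rw [← Set.ncard_coe_finset, ← Set.ncard_image_of_injective (e ⁻¹' F) e.injective,
          Set.image_preimage_eq _ e.surjective]

theorem exists_max_pair_with_weights_between_general (hγ : n / 2 ≤ bweight γ) :
    ∃ T' T'' : Set (Fin n → Bool), (AntichainPair T' T'' ∧ γ ∈ T') ∧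
      (∀ U' U'' : Set (Fin n → Bool), AntichainPair U' U'' ∧ γ ∈ U' →
        U'.ncard + U''.ncard ≤ T'.ncard + T''.ncard) ∧
      ∀ α ∈ T' ∪ T'', α ≠ γ → n / 2 ≤ bweight α ∧ bweight α ≤ n / 2 + 1 := by
  obtain ⟨S, hS, hmax, hmid⟩ := exists_isPairUnion_ncard_max_middle hγ
  have hunion : {a | Minimal (· ∈ S) a} ∪ S \ {a | Minimal (· ∈ S) a} = S :=
    Set.union_sdiff_cancel fun a ha => ha.prop
  refine ⟨_, _, ⟨hS.antichainPair, hS.minimal⟩, fun U' U'' ⟨hU, hγU⟩ => ?_, ?_⟩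
  · rw [← hU.ncard_union, ← hS.antichainPair.ncard_union, hunion]
    exact hmax _ (hU.isPairUnion hγU)
  · rwa [hunion]

end Tuples

/-- For any integer `s` with `n/2 < s ≤ n`, there exists a
pair of antichains in `𝒜_s` which has the maximum cardinality among all pairs
in `𝒜_s` and in which every tuple other than `γ_s` has weight at most
`(n+3)/2` (i.e. `2‖α‖ ≤ n + 3`) and at least `⌊n/2⌋`. -/
theorem exists_max_pair_with_weights_between {n s : ℕ} (hs1 : n < 2 * s) (hs2 : s ≤ n) :
    ∃ T' T'' : Set (Fin n → Bool), MemA s T' T'' ∧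
      (∀ U' U'' : Set (Fin n → Bool), MemA s U' U'' →
        U'.ncard + U''.ncard ≤ T'.ncard + T''.ncard) ∧
      ∀ α ∈ T' ∪ T'', α ≠ gammaTuple n s →
        n / 2 ≤ bweight α ∧ 2 * bweight α ≤ n + 3 := by
  obtain ⟨T', T'', hT, hmax, hmid⟩ := exists_max_pair_with_weights_between_general
    (γ := gammaTuple n s) (by rw [bweight_gammaTuple hs2]; omega)
  exact ⟨T', T'', hT, hmax, fun α hα hne => (hmid α hα hne).imp_right (by omega)⟩
end

section
/- For any integer t with 1 ≤ t ≤ ⌊n/2⌋ + 1, let T' = B^n_{t−1} (all tuples of weight t−1) and T'' = B^n_t (all tuples of weight t). Then (T', T'') ∈ 𝒜'_t and (T', T'') has the maximum cardinality among all pairs in 𝒜'_t. -/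
/-!
Identify tuples with their sets of 1-positions and give a set `s` the weight `1 / C(n, #s)`. By the
Lubell–Yamamoto–Meshalkin inequality, `m` disjoint antichains have total weight at most `m`, which
is exactly the total weight of `m` consecutive full layers. Hence the sets of the antichains that
lie outside these layers weigh together at most as much as the layer sets missing from the
antichains. If every set below the layers is at least as heavy as every set in them, and no set of
the antichains lies above them, the former sets are therefore at most as many as the latter. The
weights compare in this way because `C(n, q) ≤ C(n, k)` whenever `q ≤ k ≤ n - q`. Pairs of
antichains are the case `m = 2`.
-/

section

open Finset

lemma choose_le_choose_of_le_half {n k l : ℕ} (hkl : k ≤ l) (hl : l ≤ n / 2) :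
    n.choose k ≤ n.choose l := by
  induction l, hkl using Nat.le_induction with
  | base => exact le_rfl
  | succ m _ ih => exact (ih (by lia)).trans (Nat.choose_le_succ_of_lt_half_left (by lia))

lemma choose_le_choose_of_le_of_add_le {n k l : ℕ} (hkl : k ≤ l) (hadd : k + l ≤ n) :
    n.choose k ≤ n.choose l := by
  rcases le_or_gt l (n / 2) with hl | hl
  · exact choose_le_choose_of_le_half hkl hl
  · rw [← Nat.choose_symm (show l ≤ n by lia)]
    exact choose_le_choose_of_le_half (by lia) (by lia)

lemma card_le_card_of_sum_le_sum {ι R : Type*} [DecidableEq ι] [Ring R] [LinearOrder R]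
    [IsStrictOrderedRing R] {S L : Finset ι} {w : ι → R} {c : R} (hc : 0 < c)
    (hL : ∀ x ∈ L, w x ≤ c) (hS : ∀ x ∈ S \ L, c ≤ w x)
    (hsum : ∑ x ∈ S, w x ≤ ∑ x ∈ L, w x) : #S ≤ #L := by
  rw [← card_sdiff_le_card_sdiff_iff]
  have hmul : #(S \ L) * c ≤ #(L \ S) * c :=
    calc #(S \ L) * c
      _ ≤ ∑ x ∈ S \ L, w x := by simpa using card_nsmul_le_sum _ _ _ hS
      _ ≤ ∑ x ∈ L \ S, w x := sum_sdiff_le_sum_sdiff.2 hsum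
      _ ≤ #(L \ S) * c := by
        simpa using sum_le_card_nsmul _ _ _ fun x hx => hL x (sdiff_subset hx)
  exact_mod_cast le_of_mul_le_mul_right hmul hc

section SetFamily

variable {α : Type*} [Fintype α]

lemma sum_filter_card_mem {M : Type*} [AddCommMonoid M] (K : Finset ℕ) (f : ℕ → M) :
    ∑ s : Finset α with #s ∈ K, f #s = ∑ k ∈ K, (Fintype.card α).choose k • f k := by
  classical
  rw [← sum_fiberwise_of_maps_to' (t := K) (g := card) (by simp)]
  refine sum_congr rfl fun k hk => ?_
  have hlayer : ({s ∈ {s : Finset α | #s ∈ K} | #s = k} : Finset (Finset α)) =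
      powersetCard k univ := by
    ext s
    simp only [mem_filter, mem_powersetCard_univ]
    grind
  rw [sum_const, hlayer, card_powersetCard, card_univ]

lemma card_filter_card_mem (K : Finset ℕ) :
    #{s : Finset α | #s ∈ K} = ∑ k ∈ K, (Fintype.card α).choose k := by
  simpa using sum_filter_card_mem (α := α) K fun _ => (1 : ℕ)

lemma sum_inv_choose_filter_card_mem {K : Finset ℕ} (hK : ∀ k ∈ K, k ≤ Fintype.card α) :
    ∑ s : Finset α with #s ∈ K, ((Fintype.card α).choose #s : ℚ)⁻¹ = #K := by
  rw [sum_filter_card_mem K fun k => ((Fintype.card α).choose k : ℚ)⁻¹, cast_card]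
  refine sum_congr rfl fun k hk => ?_
  have hpos : (0 : ℚ) < (Fintype.card α).choose k := mod_cast Nat.choose_pos (hK k hk)
  rw [nsmul_eq_mul, mul_inv_cancel₀ hpos.ne']

lemma card_le_sum_choose_of_sum_inv_choose_le {𝒰 : Finset (Finset α)} {r m : ℕ}
    (hrm : 2 * r + m ≤ Fintype.card α + 2) (hcard : ∀ s ∈ 𝒰, #s < r + m)
    (hlym : ∑ s ∈ 𝒰, ((Fintype.card α).choose #s : ℚ)⁻¹ ≤ m) :
    #𝒰 ≤ ∑ k ∈ Ico r (r + m), (Fintype.card α).choose k := by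
  classical
  rw [← card_filter_card_mem]
  cases r with
  | zero => exact card_le_card fun s hs => by simpa using hcard s hs
  | succ q =>
    have hpos {k : ℕ} (hk : k ≤ Fintype.card α) : (0 : ℚ) < (Fintype.card α).choose k :=
      mod_cast Nat.choose_pos hk
    -- The threshold is the weight of the sets in the layer just below the full ones.
    refine card_le_card_of_sum_le_sum (w := fun s => ((Fintype.card α).choose #s : ℚ)⁻¹)
      (c := ((Fintype.card α).choose q : ℚ)⁻¹) (inv_pos.2 (hpos (by lia))) ?_ ?_ ?_
    · intro s hs
      rw [mem_filter_univ, mem_Ico] at hs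
      gcongr
      · exact hpos (by lia)
      · exact choose_le_choose_of_le_of_add_le (by lia) (by lia)
    · intro s hs
      rw [mem_sdiff, mem_filter_univ, mem_Ico] at hs
      have hlt := hcard s hs.1
      gcongr
      · exact hpos (card_le_univ s)
      · exact choose_le_choose_of_le_of_add_le (by lia) (by lia)
    · rw [sum_inv_choose_filter_card_mem fun k hk => by rw [mem_Ico] at hk; lia]
      simpa using hlym

theorem sum_card_le_sum_choose_of_isAntichain {ι : Type*} {I : Finset ι}
    {𝒜 : ι → Finset (Finset α)} {r : ℕ} (hr : 2 * r + #I ≤ Fintype.card α + 2)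
    (hanti : ∀ i ∈ I, IsAntichain (· ⊆ ·) (𝒜 i : Set (Finset α)))
    (hdisj : (I : Set ι).PairwiseDisjoint 𝒜) (hcard : ∀ i ∈ I, ∀ s ∈ 𝒜 i, #s < r + #I) :
    ∑ i ∈ I, #(𝒜 i) ≤ ∑ k ∈ Ico r (r + #I), (Fintype.card α).choose k := by
  classical
  rw [← card_biUnion hdisj]
  refine card_le_sum_choose_of_sum_inv_choose_le hr
    (fun s hs => let ⟨i, hi, hsi⟩ := mem_biUnion.1 hs; hcard i hi s hsi) ?_
  rw [sum_biUnion hdisj, cast_card]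
  exact sum_le_sum fun i hi => lubell_yamamoto_meshalkin_inequality_sum_inv_choose (hanti i hi)

end SetFamily

/-- The order isomorphism sending a binary tuple to the set of positions of its 1-components, by
which results on set families are transferred to tuples. -/
def trueSet {ι : Type*} [Fintype ι] [DecidableEq ι] : (ι → Bool) ≃o Finset ι where
  toFun a := {i | a i = true}
  invFun s i := decide (i ∈ s)
  left_inv a := by simp
  right_inv s := by simp
  map_rel_iff' {a b} := by
    simp [Finset.subset_iff, Pi.le_def, Bool.le_iff_imp]

variable {n : ℕ}

lemma card_trueSet (a : Fin n → Bool) : #(trueSet a) = bweight a := rfl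

lemma bweight_strictMono : StrictMono (bweight (n := n)) :=
  card_strictMono.comp trueSet.strictMono

lemma isAntichain_setOf_bweight_eq (k : ℕ) :
    IsAntichain (· ≤ ·) {a : Fin n → Bool | bweight a = k} := fun _ ha _ hb hne hle =>
  (bweight_strictMono (hle.lt_of_ne hne)).ne (ha.trans hb.symm)

lemma pairBelow_setOf_bweight_eq {j k : ℕ} (hjk : j < k) :
    PairBelow {a : Fin n → Bool | bweight a = j} {a | bweight a = k} := by
  rintro a rfl b rfl hle
  exact hjk.not_ge (bweight_strictMono.monotone hle)

lemma ncard_setOf_bweight_eq (k : ℕ) : {a : Fin n → Bool | bweight a = k}.ncard = n.choose k := by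
  have hpreimage : {a : Fin n → Bool | bweight a = k} =
      trueSet ⁻¹' (powersetCard k univ : Finset (Finset (Fin n))) := by
    ext a
    simp [card_trueSet]
  rw [hpreimage, Set.ncard_preimage_of_injective_subset_range trueSet.injective
    (by simp [trueSet.surjective.range_eq]), Set.ncard_coe_finset, card_powersetCard, card_fin]

lemma AntichainPair.disjoint {T' T'' : Set (Fin n → Bool)} (h : AntichainPair T' T'') :
    Disjoint T' T'' :=
  Set.disjoint_left.2 fun a ha' ha'' => h.2.2 a ha' a ha'' le_rfl

theorem sum_ncard_le_sum_choose_of_isAntichain {ι : Type*} {I : Finset ι}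
    {T : ι → Set (Fin n → Bool)} {r : ℕ} (hr : 2 * r + #I ≤ n + 2)
    (hanti : ∀ i ∈ I, IsAntichain (· ≤ ·) (T i)) (hdisj : (I : Set ι).PairwiseDisjoint T)
    (hweight : ∀ i ∈ I, ∀ a ∈ T i, bweight a < r + #I) :
    ∑ i ∈ I, (T i).ncard ≤ ∑ k ∈ Ico r (r + #I), n.choose k := by
  classical
  have hsets := sum_card_le_sum_choose_of_isAntichain (I := I) (r := r)
    (𝒜 := fun i => (T i).toFinset.image trueSet) (by simpa using hr)
    (fun i hi => by simpa using (hanti i hi).image_iso trueSet)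
    (fun i hi j hj hij => by
      simpa [Function.onFun, disjoint_image trueSet.injective] using hdisj hi hj hij)
    (fun i hi => by simpa [card_trueSet] using hweight i hi)
  simpa [Set.ncard_eq_toFinset_card', card_image_of_injective _ trueSet.injective] using hsets

lemma memA'_setOf_bweight_eq {t : ℕ} (ht : 1 ≤ t) :
    MemA' t {a : Fin n → Bool | bweight a = t - 1} {a | bweight a = t} := by
  refine ⟨⟨isAntichain_setOf_bweight_eq _, isAntichain_setOf_bweight_eq _,
    pairBelow_setOf_bweight_eq (by lia)⟩, ?_⟩
  rintro a (ha | ha)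
  · exact ha.trans_le (t.sub_le 1)
  · exact ha.le

lemma MemA'.ncard_add_ncard_le {r : ℕ} (hr : r ≤ n / 2) {T' T'' : Set (Fin n → Bool)}
    (h : MemA' (r + 1) T' T'') :
    T'.ncard + T''.ncard ≤ n.choose r + n.choose (r + 1) := by
  obtain ⟨hpair, hweight⟩ := h
  have hsum := sum_ncard_le_sum_choose_of_isAntichain (I := univ) (T := ![T', T'']) (r := r)
    (by rw [card_fin]; lia)
    (by simpa [Fin.forall_fin_two] using ⟨hpair.1, hpair.2.1⟩)
    (by simpa [Set.PairwiseDisjoint, Set.Pairwise, Fin.forall_fin_two, Function.onFun] using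
      ⟨hpair.disjoint, hpair.disjoint.symm⟩)
    (by
      simp only [mem_univ, card_fin, forall_const, Fin.forall_fin_two]
      exact ⟨fun a ha => Nat.lt_succ_of_le (hweight a (.inl ha)),
        fun a ha => Nat.lt_succ_of_le (hweight a (.inr ha))⟩)
  simpa [sum_Ico_succ_top] using hsum

end

/-- For any integer `t` with `1 ≤ t ≤ ⌊n/2⌋ + 1`, let
`T' = Bⁿ_{t−1}` (all tuples of weight `t − 1`) and `T'' = Bⁿ_t` (all tuples of
weight `t`). Then `(T', T'') ∈ 𝒜'_t` and `(T', T'')` has the maximum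
cardinality among all pairs in `𝒜'_t`. -/
theorem explicit_max_pair_in_A' {n t : ℕ} (ht1 : 1 ≤ t) (ht2 : t ≤ n / 2 + 1) :
    MemA' t {α : Fin n → Bool | bweight α = t - 1}
      {α : Fin n → Bool | bweight α = t} ∧
    ∀ U' U'' : Set (Fin n → Bool), MemA' t U' U'' →
      U'.ncard + U''.ncard ≤
        {α : Fin n → Bool | bweight α = t - 1}.ncard +
        {α : Fin n → Bool | bweight α = t}.ncard := by
  refine ⟨memA'_setOf_bweight_eq ht1, fun U' U'' hU => ?_⟩
  obtain ⟨r, rfl⟩ := Nat.exists_eq_add_of_le' ht1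
  rw [ncard_setOf_bweight_eq, ncard_setOf_bweight_eq]
  exact hU.ncard_add_ncard_le (by lia)
end
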